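/- arXiv:1712.09433 — 2 statements merged into one kernel-verified Lean document; each statement's English description precedes it below -/
import Mathlib

section
/- Let S and J be independent nonnegative random variables on a probability space, let a > 0, and let B > 0. Then the average throughput τ = E[B·log₂(1 + S/(J + a))] satisfies τ = (B/ln 2) · ∫₀^∞ e^{-t·a} · E[e^{-t·J}] · (1 − E[e^{-t·S}]) · (1/t) dt, where the equality holds as an identity of values in [0, ∞] (both sides are well-defined since log₂(1+x) ≥ 0 for x ≥ 0 and the integrand on the right is nonnegative). -/
open MeasureTheory Real Set

/-!
For fixed `0 < x ≤ y`, integrating `exp (-t * u)` over `(t, u) ∈ (0, ∞) × (x, y]` in both orders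
gives the Frullani integral `∫₀^∞ (exp (-t * x) - exp (-t * y)) / t dt = log (y / x)`. Averaging it
at `x = J + a` and `y = J + a + S` turns the exponentials into Laplace transforms, that is, moment
generating functions at `-t`, and by independence the one of `J + a + S` factors.
-/

open ProbabilityTheory

section Frullani

variable {x y : ℝ}

lemma lintegral_Ioi_exp_neg_mul (hx : 0 < x) :
    ∫⁻ t in Ioi (0 : ℝ), ENNReal.ofReal (exp (-t * x)) = ENNReal.ofReal x⁻¹ := by
  simp_rw [neg_mul_comm, mul_comm _ (-x)]
  rw [← ofReal_integral_eq_lintegral_ofReal (integrableOn_exp_mul_Ioi (neg_lt_zero.2 hx) 0)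
    (.of_forall fun _ => (exp_pos _).le), integral_exp_mul_Ioi (neg_lt_zero.2 hx)]
  simp

lemma lintegral_Ioc_exp_neg_mul {t : ℝ} (ht : t ≠ 0) (hxy : x ≤ y) :
    ∫⁻ u in Ioc x y, ENNReal.ofReal (exp (-t * u))
      = ENNReal.ofReal ((exp (-t * x) - exp (-t * y)) / t) := by
  have hcont : Continuous fun u => exp (-t * u) := by fun_prop
  rw [← ofReal_integral_eq_lintegral_ofReal hcont.integrableOn_Ioc
    (.of_forall fun _ => (exp_pos _).le), ← intervalIntegral.integral_of_le hxy,
    intervalIntegral.integral_comp_mul_left exp (neg_ne_zero.2 ht), integral_exp, smul_eq_mul]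
  congr 1
  field_simp
  ring

lemma lintegral_Ioc_inv (hx : 0 < x) (hxy : x ≤ y) :
    ∫⁻ u in Ioc x y, ENNReal.ofReal u⁻¹ = ENNReal.ofReal (log (y / x)) := by
  have hy : 0 < y := hx.trans_le hxy
  have hint : IntervalIntegrable (fun u : ℝ => u⁻¹) volume x y :=
    intervalIntegrable_inv_iff.2 (.inr (notMem_uIcc_of_lt hx hy))
  have hnonneg : ∀ᵐ u ∂volume.restrict (Ioc x y), 0 ≤ u⁻¹ :=
    ae_restrict_of_forall_mem measurableSet_Ioc fun u hu => (inv_pos.2 (hx.trans hu.1)).le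
  rw [← ofReal_integral_eq_lintegral_ofReal hint.1 hnonneg,
    ← intervalIntegral.integral_of_le hxy, integral_inv_of_pos hx hy]

lemma lintegral_Ioi_exp_sub_exp_div (hx : 0 < x) (hxy : x ≤ y) :
    ∫⁻ t in Ioi (0 : ℝ), ENNReal.ofReal ((exp (-t * x) - exp (-t * y)) / t)
      = ENNReal.ofReal (log (y / x)) := calc
  _ = ∫⁻ t in Ioi (0 : ℝ), ∫⁻ u in Ioc x y, ENNReal.ofReal (exp (-t * u)) :=
    setLIntegral_congr_fun measurableSet_Ioi fun _ ht =>
      (lintegral_Ioc_exp_neg_mul (ne_of_gt ht) hxy).symm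
  _ = ∫⁻ u in Ioc x y, ∫⁻ t in Ioi (0 : ℝ), ENNReal.ofReal (exp (-t * u)) :=
    lintegral_lintegral_swap (by fun_prop)
  _ = ∫⁻ u in Ioc x y, ENNReal.ofReal u⁻¹ :=
    setLIntegral_congr_fun measurableSet_Ioc fun _ hu =>
      lintegral_Ioi_exp_neg_mul (hx.trans hu.1)
  _ = ENNReal.ofReal (log (y / x)) := lintegral_Ioc_inv hx hxy

end Frullani

section Laplace

variable {Ω : Type*} [MeasurableSpace Ω] {μ : Measure Ω} {X Y : Ω → ℝ}

lemma integrable_exp_neg_mul_of_nonneg [IsFiniteMeasure μ] {t : ℝ} (ht : 0 ≤ t)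
    (hX : AEMeasurable X μ) (hX0 : ∀ᵐ ω ∂μ, 0 ≤ X ω) :
    Integrable (fun ω => exp (-t * X ω)) μ := by
  have hneg : ∀ᵐ ω ∂μ, (-X) ω ≤ 0 := hX0.mono fun _ => neg_nonpos.2
  simpa only [Pi.neg_apply, neg_mul_comm] using integrable_exp_mul_of_le t 0 ht hX.neg hneg

lemma lintegral_exp_sub_exp_div [IsFiniteMeasure μ] {t : ℝ} (ht : 0 ≤ t)
    (hX : AEMeasurable X μ) (hY : AEMeasurable Y μ)
    (hX0 : ∀ᵐ ω ∂μ, 0 ≤ X ω) (hXY : X ≤ᵐ[μ] Y) :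
    ∫⁻ ω, ENNReal.ofReal ((exp (-t * X ω) - exp (-t * Y ω)) / t) ∂μ
      = ENNReal.ofReal ((mgf X μ (-t) - mgf Y μ (-t)) / t) := by
  have hXint := integrable_exp_neg_mul_of_nonneg ht hX hX0
  have hYint := integrable_exp_neg_mul_of_nonneg ht hY
    (by filter_upwards [hX0, hXY] with ω using le_trans)
  have hnonneg : ∀ᵐ ω ∂μ, 0 ≤ (exp (-t * X ω) - exp (-t * Y ω)) / t := by
    filter_upwards [hXY] with ω hω
    refine div_nonneg (sub_nonneg.2 (exp_le_exp.2 ?_)) ht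
    exact mul_le_mul_of_nonpos_left hω (neg_nonpos.2 ht)
  have hint : Integrable (fun ω => (exp (-t * X ω) - exp (-t * Y ω)) / t) μ :=
    (hXint.sub hYint).div_const t
  rw [← ofReal_integral_eq_lintegral_ofReal hint hnonneg, integral_div,
    integral_sub hXint hYint, mgf, mgf]

lemma lintegral_log_div_eq_lintegral_mgf_sub_mgf [IsFiniteMeasure μ]
    (hX : AEMeasurable X μ) (hY : AEMeasurable Y μ)
    (hX0 : ∀ᵐ ω ∂μ, 0 < X ω) (hXY : X ≤ᵐ[μ] Y) :
    ∫⁻ ω, ENNReal.ofReal (log (Y ω / X ω)) ∂μ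
      = ∫⁻ t in Ioi (0 : ℝ), ENNReal.ofReal ((mgf X μ (-t) - mgf Y μ (-t)) / t) := calc
  _ = ∫⁻ ω, (∫⁻ t in Ioi (0 : ℝ),
        ENNReal.ofReal ((exp (-t * X ω) - exp (-t * Y ω)) / t)) ∂μ := by
    refine lintegral_congr_ae ?_
    filter_upwards [hX0, hXY] with ω hpos hle using (lintegral_Ioi_exp_sub_exp_div hpos hle).symm
  _ = ∫⁻ t in Ioi (0 : ℝ), ∫⁻ ω,
        ENNReal.ofReal ((exp (-t * X ω) - exp (-t * Y ω)) / t) ∂μ :=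
    lintegral_lintegral_swap (by fun_prop)
  _ = _ :=
    setLIntegral_congr_fun measurableSet_Ioi fun _ ht =>
      lintegral_exp_sub_exp_div (le_of_lt ht) hX hY (hX0.mono fun _ => le_of_lt) hXY

lemma lintegral_log_one_add_div_eq_lintegral_mgf [IsFiniteMeasure μ]
    (hX : AEMeasurable X μ) (hY : AEMeasurable Y μ)
    (hX0 : ∀ᵐ ω ∂μ, 0 ≤ X ω) (hY0 : ∀ᵐ ω ∂μ, 0 < Y ω) (hindep : X ⟂ᵢ[μ] Y) :
    ∫⁻ ω, ENNReal.ofReal (log (1 + X ω / Y ω)) ∂μ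
      = ∫⁻ t in Ioi (0 : ℝ), ENNReal.ofReal (mgf Y μ (-t) * (1 - mgf X μ (-t)) / t) := by
  have hratio : ∀ᵐ ω ∂μ, 1 + X ω / Y ω = (X + Y) ω / Y ω :=
    hY0.mono fun ω hω => by rw [Pi.add_apply, add_div, div_self hω.ne', add_comm]
  have hle : Y ≤ᵐ[μ] X + Y := hX0.mono fun _ => le_add_of_nonneg_left
  have hfactor (t : ℝ) :
      mgf Y μ (-t) - mgf (X + Y) μ (-t) = mgf Y μ (-t) * (1 - mgf X μ (-t)) := by
    rw [hindep.mgf_add' hX.aestronglyMeasurable hY.aestronglyMeasurable]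
    ring
  rw [lintegral_congr_ae (hratio.mono fun ω hω => congrArg (ENNReal.ofReal <| log ·) hω),
    lintegral_log_div_eq_lintegral_mgf_sub_mgf hY (hX.add hY) hY0 hle]
  simp_rw [hfactor]

end Laplace

theorem avg_throughput_laplace_general
    {Ω : Type*} [MeasurableSpace Ω] {μ : Measure Ω} [IsProbabilityMeasure μ]
    {S J : Ω → ℝ} (hS : AEMeasurable S μ) (hJ : AEMeasurable J μ) {a B : ℝ}
    (hS0 : ∀ᵐ ω ∂μ, 0 ≤ S ω) (hJa : ∀ᵐ ω ∂μ, 0 < J ω + a)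
    (hindep : S ⟂ᵢ[μ] J) (hB : 0 ≤ B) :
    ∫⁻ ω, ENNReal.ofReal (B * logb 2 (1 + S ω / (J ω + a))) ∂μ
      = ∫⁻ t in Ioi (0 : ℝ),
          ENNReal.ofReal ((B / log 2) * exp (-(t * a))
            * (∫ ω, exp (-(t * J ω)) ∂μ)
            * (1 - ∫ ω, exp (-(t * S ω)) ∂μ) * (1 / t)) := by
  have hconst : 0 ≤ B / log 2 := by positivity
  have hindep_add : S ⟂ᵢ[μ] fun ω => J ω + a :=
    hindep.comp measurable_id (measurable_add_const a)
  calc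
  _ = ENNReal.ofReal (B / log 2)
        * ∫⁻ ω, ENNReal.ofReal (log (1 + S ω / (J ω + a))) ∂μ := by
    simp_rw [← lintegral_const_mul' _ _ ENNReal.ofReal_ne_top, ← ENNReal.ofReal_mul hconst,
      logb, mul_div_assoc', div_mul_eq_mul_div]
  _ = ENNReal.ofReal (B / log 2) * ∫⁻ t in Ioi (0 : ℝ),
        ENNReal.ofReal (mgf (fun ω => J ω + a) μ (-t) * (1 - mgf S μ (-t)) / t) := by
    rw [lintegral_log_one_add_div_eq_lintegral_mgf hS (hJ.add_const a) hS0 hJa hindep_add]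
  _ = _ := by
    simp_rw [← lintegral_const_mul' _ _ ENNReal.ofReal_ne_top, ← ENNReal.ofReal_mul hconst,
      mgf_add_const, mgf, neg_mul]
    refine lintegral_congr fun t => congrArg ENNReal.ofReal ?_
    ring

/-- **Theorem 1 (average user throughput).**
If `S` (signal power) and `J` (interference power) are independent nonnegative
random variables, `a = σₙ²/P > 0` is the normalized noise power and `B > 0` the
bandwidth, then the average throughput `τ = E[B·log₂(1 + S/(J+a))]` equals
`(B/ln 2) ∫₀^∞ e^{-ta} · E[e^{-tJ}] · (1 − E[e^{-tS}]) · t⁻¹ dt`,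
as an identity in `[0, ∞]`. -/
theorem avg_throughput_laplace
    {Ω : Type*} [MeasurableSpace Ω] (μ : Measure Ω) [IsProbabilityMeasure μ]
    (S J : Ω → ℝ) (hSm : Measurable S) (hJm : Measurable J)
    (hSnn : ∀ ω, 0 ≤ S ω) (hJnn : ∀ ω, 0 ≤ J ω)
    (hindep : ProbabilityTheory.IndepFun S J μ)
    (a B : ℝ) (ha : 0 < a) (hB : 0 < B) :
    ∫⁻ ω, ENNReal.ofReal (B * Real.logb 2 (1 + S ω / (J ω + a))) ∂μ
      = ∫⁻ t in Ioi (0 : ℝ),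
          ENNReal.ofReal ((B / Real.log 2) * Real.exp (-(t * a))
            * (∫ ω, Real.exp (-(t * J ω)) ∂μ)
            * (1 - ∫ ω, Real.exp (-(t * S ω)) ∂μ) * (1 / t)) :=
  avg_throughput_laplace_general hSm.aemeasurable hJm.aemeasurable (.of_forall hSnn)
    (.of_forall fun ω => add_pos_of_nonneg_of_pos (hJnn ω) ha) hindep hB.le
end

section
/- Let g be a random variable with the exponential distribution of rate 1, let S′ be a nonnegative random variable independent of g, and let ℓ > 0 be a constant. Then E[ ℓ·g / (ℓ·g + S′) ] = ∫₀^∞ (1+t)^{-2} · E[e^{-t·S′/ℓ}] dt. -/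
open MeasureTheory Real Set

/-! Since `1 / D = ∫₀^∞ e^{-tD} dt` for `D > 0`, Fubini gives `E[X / D] = ∫₀^∞ E[X e^{-tD}] dt`.
For `D = X + Y` with `X` and `Y` independent, the integrand factors as `E[X e^{-tX}] E[e^{-tY}]`.
Dividing through by `ℓ` puts the power weight in this form with `X = g` and `Y = S' / ℓ`, and
`E[g e^{-tg}] = (1 + t)⁻²`, a Gamma integral. -/

open ProbabilityTheory

section GammaDistribution

lemma measurable_gammaPDF (a r : ℝ) : Measurable (gammaPDF a r) :=
  (measurable_gammaPDFReal a r).ennreal_ofReal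

lemma gammaMeasure_ae_pos (a r : ℝ) : ∀ᵐ x ∂gammaMeasure a r, 0 < x := by
  rw [gammaMeasure, ae_withDensity_iff (measurable_gammaPDF a r)]
  filter_upwards [Measure.ae_ne volume 0] with x hx hpdf
  contrapose! hpdf
  exact gammaPDF_of_neg (hpdf.lt_of_ne hx)

lemma integral_gammaMeasure {E : Type*} [NormedAddCommGroup E] [NormedSpace ℝ E] {a r : ℝ}
    (ha : 0 < a) (hr : 0 < r) (f : ℝ → E) :
    ∫ x, f x ∂gammaMeasure a r
      = ∫ x in Ioi 0, (r ^ a / Gamma a * x ^ (a - 1) * exp (-(r * x))) • f x := by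
  rw [gammaMeasure, integral_withDensity_eq_integral_toReal_smul
    (measurable_gammaPDF a r) (ae_of_all _ fun _ ↦ ENNReal.ofReal_lt_top),
    ← integral_Ici_eq_integral_Ioi, ← integral_indicator measurableSet_Ici]
  congr with x
  by_cases hx : 0 ≤ x
  · rw [indicator_of_mem (mem_Ici.mpr hx), gammaPDF_of_nonneg hx, ENNReal.toReal_ofReal]
    positivity
  · rw [indicator_of_notMem (by simpa using hx), gammaPDF_of_neg (not_le.mp hx)]
    simp

lemma integral_rpow_mul_exp_neg_gammaMeasure {a r s t : ℝ} (ha : 0 < a) (hr : 0 < r)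
    (hs : 0 < a + s) (ht : 0 < r + t) :
    ∫ x, x ^ s * exp (-(t * x)) ∂gammaMeasure a r
      = r ^ a / Gamma a * (Gamma (a + s) / (r + t) ^ (a + s)) := by
  have collect_powers : ∀ x ∈ Ioi (0 : ℝ),
      (r ^ a / Gamma a * x ^ (a - 1) * exp (-(r * x))) • (x ^ s * exp (-(t * x)))
        = r ^ a / Gamma a * (x ^ (a + s - 1) * exp (-((r + t) * x))) := fun x hx ↦ by
    rw [show a + s - 1 = (a - 1) + s by ring, rpow_add hx,
      show -((r + t) * x) = -(r * x) + -(t * x) by ring, exp_add, smul_eq_mul]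
    ring
  rw [integral_gammaMeasure ha hr, setIntegral_congr_fun measurableSet_Ioi collect_powers,
    integral_const_mul, integral_rpow_mul_exp_neg_mul_Ioi hs ht, div_rpow zero_le_one ht.le,
    one_rpow, one_div_mul_eq_div]

lemma integral_mul_exp_neg_expMeasure {r t : ℝ} (hr : 0 < r) (ht : 0 < r + t) :
    ∫ x, x * exp (-(t * x)) ∂expMeasure r = r / (r + t) ^ 2 := by
  simpa [expMeasure, one_add_one_eq_two, div_eq_mul_inv] using
    integral_rpow_mul_exp_neg_gammaMeasure (s := 1) one_pos hr (by norm_num) ht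

end GammaDistribution

section LaplaceTransform

lemma integrableOn_exp_neg_mul_Ioi_zero {c : ℝ} (hc : 0 < c) :
    IntegrableOn (fun t ↦ exp (-(t * c))) (Ioi 0) := by
  simpa [mul_comm] using integrableOn_exp_mul_Ioi (neg_lt_zero.mpr hc) 0

lemma integral_exp_neg_mul_Ioi_zero {c : ℝ} (hc : 0 < c) :
    ∫ t in Ioi (0 : ℝ), exp (-(t * c)) = c⁻¹ := by
  simpa [mul_comm] using integral_exp_mul_Ioi (neg_lt_zero.mpr hc) 0

variable {Ω : Type*} [MeasurableSpace Ω] {μ : Measure Ω}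

lemma integrable_prod_mul_exp_neg [SFinite μ] {f D : Ω → ℝ} (hD : AEMeasurable D μ)
    (hDpos : ∀ᵐ ω ∂μ, 0 < D ω) (hfD : Integrable (fun ω ↦ f ω / D ω) μ) :
    Integrable (fun p : Ω × ℝ ↦ f p.1 * exp (-(p.2 * D p.1)))
      (μ.prod (volume.restrict (Ioi 0))) := by
  have hf : AEMeasurable f μ := by
    refine (hfD.aemeasurable.mul hD).congr ?_
    filter_upwards [hDpos] with ω hω using div_mul_cancel₀ _ hω.ne'
  have hmeas : AEMeasurable (fun p : Ω × ℝ ↦ f p.1 * exp (-(p.2 * D p.1)))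
      (μ.prod (volume.restrict (Ioi 0))) :=
    hf.comp_fst.mul (measurable_snd.aemeasurable.mul hD.comp_fst).neg.exp
  refine (integrable_prod_iff hmeas.aestronglyMeasurable).mpr ⟨?_, hfD.norm.congr ?_⟩
  · filter_upwards [hDpos] with ω hω
    exact (integrableOn_exp_neg_mul_Ioi_zero hω).const_mul _
  · filter_upwards [hDpos] with ω hω
    simp only [norm_mul, norm_div, norm_of_nonneg (exp_nonneg _), norm_of_nonneg hω.le]
    rw [integral_const_mul, integral_exp_neg_mul_Ioi_zero hω, div_eq_mul_inv]

lemma integral_div_eq_integral_Ioi_integral_mul_exp_neg [SFinite μ] {f D : Ω → ℝ}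
    (hD : AEMeasurable D μ) (hDpos : ∀ᵐ ω ∂μ, 0 < D ω)
    (hfD : Integrable (fun ω ↦ f ω / D ω) μ) :
    ∫ ω, f ω / D ω ∂μ = ∫ t in Ioi (0 : ℝ), ∫ ω, f ω * exp (-(t * D ω)) ∂μ := by
  rw [← integral_integral_swap (integrable_prod_mul_exp_neg hD hDpos hfD)]
  refine integral_congr_ae ?_
  filter_upwards [hDpos] with ω hω
  rw [integral_const_mul, integral_exp_neg_mul_Ioi_zero hω, div_eq_mul_inv]

lemma integrable_div_add_of_nonneg [IsFiniteMeasure μ] {X Y : Ω → ℝ} (hX : AEMeasurable X μ)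
    (hY : AEMeasurable Y μ) (hX0 : ∀ᵐ ω ∂μ, 0 ≤ X ω) (hY0 : ∀ᵐ ω ∂μ, 0 ≤ Y ω) :
    Integrable (fun ω ↦ X ω / (X ω + Y ω)) μ := by
  refine .of_bound (hX.div (hX.add hY)).aestronglyMeasurable 1 ?_
  filter_upwards [hX0, hY0] with ω hXω hYω
  rw [norm_of_nonneg (by positivity)]
  exact div_le_one_of_le₀ (le_add_of_nonneg_right hYω) (by positivity)

lemma integral_div_add_of_indepFun [IsFiniteMeasure μ] {X Y : Ω → ℝ} (hX : AEMeasurable X μ)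
    (hY : AEMeasurable Y μ) (hXpos : ∀ᵐ ω ∂μ, 0 < X ω) (hY0 : ∀ᵐ ω ∂μ, 0 ≤ Y ω)
    (hXY : IndepFun X Y μ) :
    ∫ ω, X ω / (X ω + Y ω) ∂μ
      = ∫ t in Ioi (0 : ℝ), (∫ ω, X ω * exp (-(t * X ω)) ∂μ) * ∫ ω, exp (-(t * Y ω)) ∂μ := by
  have hsum : ∀ᵐ ω ∂μ, 0 < X ω + Y ω := by
    filter_upwards [hXpos, hY0] with ω hXω hYω using add_pos_of_pos_of_nonneg hXω hYω
  rw [integral_div_eq_integral_Ioi_integral_mul_exp_neg (hX.fun_add hY) hsum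
    (integrable_div_add_of_nonneg hX hY (hXpos.mono fun _ ↦ le_of_lt) hY0)]
  congr with t
  have hindep : IndepFun (fun ω ↦ X ω * exp (-(t * X ω))) (fun ω ↦ exp (-(t * Y ω))) μ :=
    hXY.comp (φ := fun x ↦ x * exp (-(t * x))) (ψ := fun y ↦ exp (-(t * y)))
      (by fun_prop) (by fun_prop)
  rw [← hindep.integral_fun_mul_eq_mul_integral (by fun_prop) (by fun_prop)]
  simp only [mul_add, neg_add, exp_add, mul_assoc]

end LaplaceTransform

/-- **Lemma 1 (mean MRT power weight).**
If `g ~ Exp(1)` is the Rayleigh fading power gain, `S'` is the (nonnegative)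
signal power from the other RAPs, independent of `g`, and `ℓ > 0` is the
path-loss gain, then the mean power weight satisfies
`E[ℓ·g/(ℓ·g + S')] = ∫₀^∞ (1+t)⁻² · E[e^{-t·S'/ℓ}] dt`. -/
theorem mean_mrt_power_weight
    {Ω : Type*} [MeasurableSpace Ω] (μ : Measure Ω) [IsProbabilityMeasure μ]
    (g S' : Ω → ℝ) (hgm : Measurable g) (hS'm : Measurable S')
    (hgexp : Measure.map g μ = ProbabilityTheory.expMeasure 1)
    (hS'nn : ∀ ω, 0 ≤ S' ω)
    (hindep : ProbabilityTheory.IndepFun g S' μ)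
    (ℓ : ℝ) (hℓ : 0 < ℓ) :
    ∫ ω, ℓ * g ω / (ℓ * g ω + S' ω) ∂μ
      = ∫ t in Ioi (0 : ℝ), ((1 + t) ^ 2)⁻¹ * ∫ ω, Real.exp (-(t * S' ω / ℓ)) ∂μ := by
  have hlaw : HasLaw g (expMeasure 1) μ := ⟨hgm.aemeasurable, hgexp⟩
  have hgpos : ∀ᵐ ω ∂μ, 0 < g ω :=
    (hlaw.ae_iff (measurableSet_setOfPred.mp measurableSet_Ioi)).mpr (gammaMeasure_ae_pos 1 1)
  have hlaplace {t : ℝ} (ht : 0 < t) : ∫ ω, g ω * exp (-(t * g ω)) ∂μ = ((1 + t) ^ 2)⁻¹ := by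
    rw [← one_div, ← integral_mul_exp_neg_expMeasure one_pos (by positivity)]
    exact hlaw.integral_comp (f := fun x ↦ x * exp (-(t * x))) (by fun_prop)
  calc ∫ ω, ℓ * g ω / (ℓ * g ω + S' ω) ∂μ
      = ∫ ω, g ω / (g ω + S' ω / ℓ) ∂μ := by
        congr with ω
        rw [← mul_div_mul_left (g ω) _ hℓ.ne', mul_add, mul_div_cancel₀ _ hℓ.ne']
    _ = ∫ t in Ioi (0 : ℝ),
          (∫ ω, g ω * exp (-(t * g ω)) ∂μ) * ∫ ω, exp (-(t * (S' ω / ℓ))) ∂μ :=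
        integral_div_add_of_indepFun hgm.aemeasurable (hS'm.div_const ℓ).aemeasurable hgpos
          (ae_of_all _ fun ω ↦ div_nonneg (hS'nn ω) hℓ.le)
          (hindep.comp measurable_id (measurable_id.div_const ℓ))
    _ = ∫ t in Ioi (0 : ℝ), ((1 + t) ^ 2)⁻¹ * ∫ ω, exp (-(t * S' ω / ℓ)) ∂μ :=
        setIntegral_congr_fun measurableSet_Ioi fun t ht ↦ by
          simp only [hlaplace ht, mul_div_assoc]
end
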